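/- Closed form of the AWGN cutset upper bound when the source-to-relay link dominates: if g_sr·P_s ≥ g_rd·P_r, then the supremum over ρ ∈ [−1,1] of min(C(B(ρ)), C(M(ρ))) equals C(B(ρ*)) = C(M(ρ*)), and it is attained at ρ = ρ*, where ρ* = (−√(g_sd·P_s·g_rd·P_r) + √(g_sr·P_s·((g_sd + g_sr)·P_s − g_rd·P_r)))/((g_sd + g_sr)·P_s). -/

import Mathlib

/-!
Increasing `ρ` raises the multiple-access term but, for `0 ≤ ρ`, lowers the broadcast term, so the
minimum of the two capacities peaks where the terms cross. With `K = (g_sd + g_sr) P_s`,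
`a = g_sd P_s` and `c = g_rd P_r`, they cross where `K ρ² + 2 √(a c) ρ = K - a - c`. Its quarter
discriminant factors as `(K - a) (K - c)`, which makes `ρ*` the larger root; the dominance condition
`a + c ≤ K` places that root in `[0, 1]`.
-/

open Set

theorem isGreatest_image_min_of_antitoneOn_of_monotoneOn {α β : Type*} [LinearOrder α]
    [LinearOrder β] {f g : α → β} {s : Set α} {x₀ : α} (hx₀ : x₀ ∈ s)
    (hf : AntitoneOn f (s ∩ Ici x₀)) (hg : MonotoneOn g (s ∩ Iic x₀)) (hfg : f x₀ = g x₀) :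
    IsGreatest ((fun x => min (f x) (g x)) '' s) (f x₀) := by
  refine ⟨⟨x₀, hx₀, by simp [hfg]⟩, ?_⟩
  rintro _ ⟨x, hx, rfl⟩
  rcases le_total x₀ x with hle | hge
  · exact (min_le_left _ _).trans (hf ⟨hx₀, self_mem_Ici⟩ ⟨hx, hle⟩ hle)
  · exact (min_le_right _ _).trans (hfg ▸ hg ⟨hx, hge⟩ ⟨hx₀, self_mem_Iic⟩ hge)

section QuadraticRoot

variable {k s d x : ℝ}

/-- The larger root of `k x² + 2 s x = d`, for `0 < k` and a nonnegative quarter discriminant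
`s² + k d`. -/
noncomputable def largerQuadraticRoot (k s d : ℝ) : ℝ :=
  (-s + √(s ^ 2 + k * d)) / k

theorem largerQuadraticRoot_spec (hk : k ≠ 0) (hdisc : 0 ≤ s ^ 2 + k * d) :
    k * largerQuadraticRoot k s d ^ 2 + 2 * s * largerQuadraticRoot k s d = d := by
  have hsq : √(s ^ 2 + k * d) ^ 2 = s ^ 2 + k * d := Real.sq_sqrt hdisc
  unfold largerQuadraticRoot
  field_simp
  linear_combination hsq

theorem le_largerQuadraticRoot (hk : 0 < k) (hx : k * x ^ 2 + 2 * s * x ≤ d) :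
    x ≤ largerQuadraticRoot k s d := by
  have hsq : (x * k + s) ^ 2 ≤ s ^ 2 + k * d := by
    linear_combination k * hx
  rw [largerQuadraticRoot, le_div_iff₀ hk]
  linarith [Real.le_sqrt_of_sq_le hsq]

theorem largerQuadraticRoot_le (hk : 0 < k) (hvertex : 0 ≤ x * k + s)
    (hx : d ≤ k * x ^ 2 + 2 * s * x) : largerQuadraticRoot k s d ≤ x := by
  have hsq : s ^ 2 + k * d ≤ (x * k + s) ^ 2 := by
    linear_combination k * hx
  rw [largerQuadraticRoot, div_le_iff₀ hk]
  linarith [Real.sqrt_le_iff.mpr ⟨hvertex, hsq⟩]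

end QuadraticRoot

/-- The capacity, in bits per channel use, of the real Gaussian channel with signal-to-noise ratio
`x`. -/
noncomputable def gaussianCapacity (x : ℝ) : ℝ :=
  (1 / 2) * Real.logb 2 (1 + x)

theorem gaussianCapacity_monotoneOn : MonotoneOn gaussianCapacity (Ioi (-1)) := by
  intro x hx y _ hxy
  have hpos : 0 < 1 + x := by linarith [mem_Ioi.mp hx]
  unfold gaussianCapacity
  gcongr
  norm_num

section SignalToNoise

variable {K a c N ρ : ℝ}

/-- The signal-to-noise ratio across the broadcast cut at source-relay correlation `ρ`, where `K`
is the total power received from the source at the relay and the destination. -/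
noncomputable def broadcastSNR (K N ρ : ℝ) : ℝ :=
  K * (1 - ρ ^ 2) / N

/-- The signal-to-noise ratio across the multiple-access cut at source-relay correlation `ρ`, where
`a` and `c` are the powers received at the destination from the source and from the relay. -/
noncomputable def multipleAccessSNR (a c N ρ : ℝ) : ℝ :=
  (a + c + 2 * ρ * √(a * c)) / N

theorem broadcastSNR_nonneg (hK : 0 ≤ K) (hN : 0 ≤ N) (hρ : ρ ∈ Icc (-1) 1) :
    0 ≤ broadcastSNR K N ρ := by
  have hsq : ρ ^ 2 ≤ 1 := (sq_le_one_iff_abs_le_one ρ).mpr (abs_le.mpr hρ)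
  exact div_nonneg (mul_nonneg hK (sub_nonneg.mpr hsq)) hN

theorem broadcastSNR_antitoneOn (hK : 0 ≤ K) (hN : 0 ≤ N) :
    AntitoneOn (broadcastSNR K N) (Ici 0) := by
  intro x hx y _ hxy
  have hx : 0 ≤ x := hx
  unfold broadcastSNR
  gcongr

theorem multipleAccessSNR_nonneg (ha : 0 ≤ a) (hc : 0 ≤ c) (hN : 0 ≤ N) (hρ : -1 ≤ ρ) :
    0 ≤ multipleAccessSNR a c N ρ := by
  refine div_nonneg ?_ hN
  calc
    0 ≤ (√a - √c) ^ 2 := sq_nonneg _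
    _ = a + c + 2 * (-1) * √(a * c) := by
      rw [sub_sq, Real.sq_sqrt ha, Real.sq_sqrt hc, Real.sqrt_mul ha]
      ring
    _ ≤ a + c + 2 * ρ * √(a * c) := by gcongr

theorem multipleAccessSNR_monotone (hN : 0 ≤ N) : Monotone (multipleAccessSNR a c N) := by
  intro x y hxy
  unfold multipleAccessSNR
  gcongr

theorem broadcastSNR_eq_multipleAccessSNR_iff (hN : N ≠ 0) :
    broadcastSNR K N ρ = multipleAccessSNR a c N ρ ↔
      K * ρ ^ 2 + 2 * √(a * c) * ρ = K - a - c := by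
  rw [broadcastSNR, multipleAccessSNR, div_left_inj' hN]
  constructor <;> intro heq <;> linear_combination -heq

theorem gaussianCapacity_broadcastSNR_antitoneOn (hK : 0 ≤ K) (hN : 0 ≤ N) :
    AntitoneOn (fun ρ => gaussianCapacity (broadcastSNR K N ρ)) (Icc 0 1) := by
  have hmaps : MapsTo (broadcastSNR K N) (Icc 0 1) (Ioi (-1)) := fun ρ hρ =>
    neg_one_lt_zero.trans_le
      (broadcastSNR_nonneg hK hN (Icc_subset_Icc_left neg_one_lt_zero.le hρ))
  exact gaussianCapacity_monotoneOn.comp_AntitoneOn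
    ((broadcastSNR_antitoneOn hK hN).mono Icc_subset_Ici_self) hmaps

theorem gaussianCapacity_multipleAccessSNR_monotoneOn (ha : 0 ≤ a) (hc : 0 ≤ c) (hN : 0 ≤ N) :
    MonotoneOn (fun ρ => gaussianCapacity (multipleAccessSNR a c N ρ)) (Ici (-1)) := by
  have hmaps : MapsTo (multipleAccessSNR a c N) (Ici (-1)) (Ioi (-1)) := fun ρ hρ =>
    neg_one_lt_zero.trans_le (multipleAccessSNR_nonneg ha hc hN hρ)
  exact gaussianCapacity_monotoneOn.comp ((multipleAccessSNR_monotone hN).monotoneOn _) hmaps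

end SignalToNoise

section BalancedCorrelation

variable {K a c N : ℝ}

/-- The source-relay correlation `ρ*` at which the broadcast and the multiple-access cut have the
same signal-to-noise ratio; the parameters are those of `broadcastSNR` and `multipleAccessSNR`. -/
noncomputable def balancedCorrelation (K a c : ℝ) : ℝ :=
  largerQuadraticRoot K √(a * c) (K - a - c)

theorem balancedCorrelation_eq (hac : 0 ≤ a * c) :
    balancedCorrelation K a c = (-√(a * c) + √((K - a) * (K - c))) / K := by
  have hdisc : √(a * c) ^ 2 + K * (K - a - c) = (K - a) * (K - c) := by
    rw [Real.sq_sqrt hac]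
    ring
  rw [balancedCorrelation, largerQuadraticRoot, hdisc]

theorem balancedCorrelation_mem_Icc (hK : 0 < K) (ha : 0 ≤ a) (hc : 0 ≤ c) (hacK : a + c ≤ K) :
    balancedCorrelation K a c ∈ Icc 0 1 := by
  have hsqrt : 0 ≤ √(a * c) := Real.sqrt_nonneg _
  exact ⟨le_largerQuadraticRoot hK (by linarith),
    largerQuadraticRoot_le hK (by linarith) (by linarith)⟩

theorem broadcastSNR_balancedCorrelation (hK : 0 < K) (hN : N ≠ 0) (hacK : a + c ≤ K) :
    broadcastSNR K N (balancedCorrelation K a c) =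
      multipleAccessSNR a c N (balancedCorrelation K a c) := by
  have hgap : 0 ≤ K - a - c := by linarith
  exact (broadcastSNR_eq_multipleAccessSNR_iff hN).mpr
    (largerQuadraticRoot_spec hK.ne' (by positivity))

theorem isGreatest_min_gaussianCapacity_balancedCorrelation (hK : 0 < K) (ha : 0 ≤ a)
    (hc : 0 ≤ c) (hN : 0 < N) (hacK : a + c ≤ K) :
    IsGreatest
      ((fun ρ => min (gaussianCapacity (broadcastSNR K N ρ))
        (gaussianCapacity (multipleAccessSNR a c N ρ))) '' Icc (-1) 1)
      (gaussianCapacity (broadcastSNR K N (balancedCorrelation K a c))) := by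
  have hmem := balancedCorrelation_mem_Icc hK ha hc hacK
  refine isGreatest_image_min_of_antitoneOn_of_monotoneOn
    (f := fun ρ => gaussianCapacity (broadcastSNR K N ρ))
    (Icc_subset_Icc_left neg_one_lt_zero.le hmem) ?_ ?_
    (congrArg gaussianCapacity (broadcastSNR_balancedCorrelation hK hN.ne' hacK))
  · exact (gaussianCapacity_broadcastSNR_antitoneOn hK.le hN.le).mono
      fun _ hρ => ⟨hmem.1.trans hρ.2, hρ.1.2⟩
  · exact (gaussianCapacity_multipleAccessSNR_monotoneOn ha hc hN.le).mono
      fun _ hρ => hρ.1.1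

end BalancedCorrelation

/-- Closed form of the AWGN cutset upper bound when the source-to-relay link
dominates: if g_sr·P_s ≥ g_rd·P_r, then the supremum over ρ ∈ [−1,1] of
min(C(B(ρ)), C(M(ρ))) equals C(B(ρ*)) = C(M(ρ*)), attained at ρ = ρ*. -/
theorem cutset_closed_form_source_relay_dominates
    (g_sd g_sr g_rd P_s P_r N : ℝ)
    (hg_sd : 0 < g_sd) (hg_sr : 0 < g_sr) (hg_rd : 0 < g_rd)
    (hP_s : 0 < P_s) (hP_r : 0 < P_r) (hN : 0 < N)
    (C B M : ℝ → ℝ)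
    (hC : ∀ x, C x = (1 / 2) * Real.logb 2 (1 + x))
    (hB : ∀ ρ, B ρ = (g_sd + g_sr) * P_s * (1 - ρ ^ 2) / N)
    (hM : ∀ ρ, M ρ =
      (g_sd * P_s + g_rd * P_r + 2 * ρ * Real.sqrt (g_sd * P_s * (g_rd * P_r))) / N)
    (h : g_sr * P_s ≥ g_rd * P_r)
    (ρstar : ℝ)
    (hρstar : ρstar =
      (-Real.sqrt (g_sd * P_s * (g_rd * P_r)) +
        Real.sqrt (g_sr * P_s * ((g_sd + g_sr) * P_s - g_rd * P_r))) /
        ((g_sd + g_sr) * P_s)) :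
    IsGreatest ((fun ρ => min (C (B ρ)) (C (M ρ))) '' Set.Icc (-1 : ℝ) 1)
        (C (B ρstar)) ∧
      C (B ρstar) = C (M ρstar) ∧
      min (C (B ρstar)) (C (M ρstar)) = C (B ρstar) := by
  obtain rfl : C = gaussianCapacity := funext hC
  obtain rfl : B = broadcastSNR ((g_sd + g_sr) * P_s) N := funext hB
  obtain rfl : M = multipleAccessSNR (g_sd * P_s) (g_rd * P_r) N := funext hM
  have ha : 0 < g_sd * P_s := by positivity
  have hc : 0 < g_rd * P_r := by positivity
  have hK : 0 < (g_sd + g_sr) * P_s := by positivity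
  have hacK : g_sd * P_s + g_rd * P_r ≤ (g_sd + g_sr) * P_s := by linarith
  obtain rfl : ρstar =
      balancedCorrelation ((g_sd + g_sr) * P_s) (g_sd * P_s) (g_rd * P_r) := by
    have hsr : (g_sd + g_sr) * P_s - g_sd * P_s = g_sr * P_s := by ring
    rw [hρstar, balancedCorrelation_eq (by positivity), hsr]
  have hbalance := congrArg gaussianCapacity
    (broadcastSNR_balancedCorrelation hK hN.ne' hacK)
  exact ⟨isGreatest_min_gaussianCapacity_balancedCorrelation hK ha.le hc.le hN hacK,
    hbalance, min_eq_left hbalance.le⟩
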